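/- arXiv:2310.20703 — 6 statements merged into one kernel-verified Lean document; each statement's English description precedes it below -/
import Mathlib

section
/- Let p and q be strictly positive probability mass functions on a nonempty finite set Y^L of sequences of length L over a finite alphabet Y (L ≥ 1). For each l ∈ {1,…,L} and prefix w ∈ Y^{l−1}, let q(w) denote the marginal probability of the prefix w under q, and let q(·|w) and p(·|w) denote the conditional distributions of the l-th coordinate given the prefix w under q and p respectively. Then for every l ∈ {1,…,L}: Σ_{w ∈ Y^{l−1}} q(w) · Σ_{a ∈ Y} |q(a|w) − p(a|w)| ≤ 4 · TV(p, q). -/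
open scoped BigOperators

noncomputable section

/-- Total variation distance between two distributions on a finite set. -/
def tv {S : Type*} [Fintype S] (p q : S → ℝ) : ℝ :=
  (1 / 2) * ∑ s : S, |p s - q s|

/-- Marginal probability of the length-`l.1` prefix `w` under a distribution `μ` on `Y^L`. -/
def prefixMarginal {Y : Type*} [Fintype Y] [DecidableEq Y] {L : ℕ}
    (μ : (Fin L → Y) → ℝ) (l : Fin L) (w : Fin l.1 → Y) : ℝ :=
  ∑ y : Fin L → Y, if ∀ i : Fin l.1, y ⟨i.1, i.2.trans l.2⟩ = w i then μ y else 0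

/-- Conditional probability, under a distribution `μ` on `Y^L`, that the `l`-th coordinate
equals `a` given that the length-`l.1` prefix equals `w`. -/
def condProb {Y : Type*} [Fintype Y] [DecidableEq Y] {L : ℕ}
    (μ : (Fin L → Y) → ℝ) (l : Fin L) (w : Fin l.1 → Y) (a : Y) : ℝ :=
  (∑ y : Fin L → Y,
      if (∀ i : Fin l.1, y ⟨i.1, i.2.trans l.2⟩ = w i) ∧ y l = a then μ y else 0) /
    prefixMarginal μ l w

/-! Write `q(w)`, `q(w, a)` for the laws of the prefix and of the prefix with its next letter. Since
`q(w, a) = q(w) q(a|w)`,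

`q(w) (q(a|w) - p(a|w)) = (q(w, a) - p(w, a)) + (p(w) - q(w)) p(a|w)`.

Summing absolute values over `a` and `w`, and using `∑ a, p(a|w) = 1`, bounds the left-hand side by
twice the total variation of the joint laws plus twice that of the prefix laws. Both laws are images
of the laws on `Y^L`, and taking images does not increase total variation. -/

section TotalVariation

variable {S W A : Type*} [Fintype S] [Fintype W] [Fintype A]

theorem two_mul_tv (p q : S → ℝ) : 2 * tv p q = ∑ s, |p s - q s| := by
  rw [tv]
  ring

theorem sum_mul_sum_abs_sub_le_two_mul_tv_add {m : W → ℝ} (hm : ∀ w, 0 ≤ m w) (n : W → ℝ)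
    (κ : W → A → ℝ) {η : W → A → ℝ} (hη : ∀ w a, 0 ≤ η w a) (hη_sum : ∀ w, ∑ a, η w a ≤ 1) :
    ∑ w, m w * ∑ a, |κ w a - η w a| ≤
      2 * tv (fun x : W × A => n x.1 * η x.1 x.2) (fun x => m x.1 * κ x.1 x.2) + 2 * tv n m := by
  have pointwise (w : W) (a : A) :
      m w * |κ w a - η w a| ≤ |n w * η w a - m w * κ w a| + |n w - m w| * η w a :=
    calc
      m w * |κ w a - η w a| = |m w * (η w a - κ w a)| := by
        rw [abs_mul, abs_of_nonneg (hm w), abs_sub_comm]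
      _ = |(n w * η w a - m w * κ w a) - (n w - m w) * η w a| := by ring_nf
      _ ≤ |n w * η w a - m w * κ w a| + |(n w - m w) * η w a| := abs_sub _ _
      _ = |n w * η w a - m w * κ w a| + |n w - m w| * η w a := by
        rw [abs_mul, abs_of_nonneg (hη w a)]
  rw [two_mul_tv, two_mul_tv, Fintype.sum_prod_type, ← Finset.sum_add_distrib]
  refine Finset.sum_le_sum fun w _ => ?_
  calc
    m w * ∑ a, |κ w a - η w a| ≤ ∑ a, (|n w * η w a - m w * κ w a| + |n w - m w| * η w a) := by
      rw [Finset.mul_sum]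
      exact Finset.sum_le_sum fun a _ => pointwise w a
    _ = ∑ a, |n w * η w a - m w * κ w a| + |n w - m w| * ∑ a, η w a := by
      rw [Finset.sum_add_distrib, Finset.mul_sum]
    _ ≤ ∑ a, |n w * η w a - m w * κ w a| + |n w - m w| :=
      add_le_add_right (mul_le_of_le_one_right (abs_nonneg _) (hη_sum w)) _

end TotalVariation

section Pushforward

variable {S T : Type*} [Fintype S] [DecidableEq T]

/-- The image under `f` of the weights `μ`, that is, the law of `f` when `μ` is a probability mass
function. The weights are real-valued so that they can be compared by `tv`. -/
def pushforward (f : S → T) (μ : S → ℝ) (t : T) : ℝ :=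
  ∑ s with f s = t, μ s

theorem pushforward_nonneg (f : S → T) {μ : S → ℝ} (hμ : ∀ s, 0 ≤ μ s) (t : T) :
    0 ≤ pushforward f μ t :=
  Finset.sum_nonneg fun s _ => hμ s

theorem pushforward_pos {f : S → T} (hf : f.Surjective) {μ : S → ℝ} (hμ : ∀ s, 0 < μ s) (t : T) :
    0 < pushforward f μ t := by
  obtain ⟨s, hs⟩ := hf t
  exact Finset.sum_pos (fun s _ => hμ s) ⟨s, by simpa using hs⟩

theorem tv_pushforward_le [Fintype T] (f : S → T) (p q : S → ℝ) :
    tv (pushforward f p) (pushforward f q) ≤ tv p q := by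
  refine mul_le_mul_of_nonneg_left ?_ (by norm_num)
  calc
    ∑ t, |pushforward f p t - pushforward f q t| = ∑ t, |∑ s with f s = t, (p s - q s)| := by
      simp only [pushforward, Finset.sum_sub_distrib]
    _ ≤ ∑ t, ∑ s with f s = t, |p s - q s| :=
      Finset.sum_le_sum fun t _ => Finset.abs_sum_le_sum_abs _ _
    _ = ∑ s, |p s - q s| := Finset.sum_fiberwise _ _ _

end Pushforward

section CondDistrib

variable {S W A : Type*} [Fintype S] [Fintype A] [DecidableEq W] [DecidableEq A]

theorem sum_pushforward_prodMk (f : S → W) (g : S → A) (μ : S → ℝ) (w : W) :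
    ∑ a, pushforward (fun s => (f s, g s)) μ (w, a) = pushforward f μ w := by
  simp only [pushforward, Prod.mk.injEq, ← Finset.filter_filter, Finset.sum_fiberwise]

/-- `κ w` is a conditional distribution of `g` given `f = w` under the weights `μ`. At a `w` of
weight zero, `κ w` may be any probability distribution, so that conditional laws make sense without
full support and without the value `x / 0 = 0`. -/
structure IsCondDistrib (f : S → W) (g : S → A) (μ : S → ℝ) (κ : W → A → ℝ) : Prop where
  nonneg : ∀ w a, 0 ≤ κ w a
  sum_eq_one : ∀ w, ∑ a, κ w a = 1
  pushforward_mul : ∀ w a,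
    pushforward f μ w * κ w a = pushforward (fun s => (f s, g s)) μ (w, a)

theorem isCondDistrib_div (f : S → W) (g : S → A) {μ : S → ℝ} (hμ : ∀ s, 0 ≤ μ s)
    (hf : ∀ w, pushforward f μ w ≠ 0) :
    IsCondDistrib f g μ fun w a =>
      pushforward (fun s => (f s, g s)) μ (w, a) / pushforward f μ w where
  nonneg w _ := div_nonneg (pushforward_nonneg _ hμ _) (pushforward_nonneg f hμ w)
  sum_eq_one w := by rw [← Finset.sum_div, sum_pushforward_prodMk, div_self (hf w)]
  pushforward_mul w _ := mul_div_cancel₀ _ (hf w)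

theorem conditional_tv_le_four_tv_general [Fintype W] {f : S → W} {g : S → A} {p q : S → ℝ}
    {κ η : W → A → ℝ} (hq : ∀ s, 0 ≤ q s) (hκ : IsCondDistrib f g q κ)
    (hη : IsCondDistrib f g p η) :
    ∑ w, pushforward f q w * ∑ a, |κ w a - η w a| ≤ 4 * tv p q := by
  let joint (μ : S → ℝ) : W × A → ℝ := pushforward (fun s => (f s, g s)) μ
  calc
    ∑ w, pushforward f q w * ∑ a, |κ w a - η w a| ≤
        2 * tv (joint p) (joint q) + 2 * tv (pushforward f p) (pushforward f q) := by
      simpa only [hκ.pushforward_mul, hη.pushforward_mul] using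
        sum_mul_sum_abs_sub_le_two_mul_tv_add (pushforward_nonneg f hq) (pushforward f p) κ
          hη.nonneg fun w => (hη.sum_eq_one w).le
    _ ≤ 2 * tv p q + 2 * tv p q := by
      gcongr <;> exact tv_pushforward_le _ _ _
    _ = 4 * tv p q := by ring

end CondDistrib

section Prefix

variable {Y : Type*} {L : ℕ}

theorem take_surjective [Nonempty Y] {k : ℕ} (h : k ≤ L) :
    (Fin.take k h : (Fin L → Y) → Fin k → Y).Surjective :=
  (Fin.castLE_injective h).surjective_comp_right

variable [Fintype Y] [DecidableEq Y]

theorem prefixMarginal_eq_pushforward (μ : (Fin L → Y) → ℝ) (l : Fin L) :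
    prefixMarginal μ l = pushforward (Fin.take l l.2.le) μ := by
  ext w
  simp only [prefixMarginal, pushforward, Finset.sum_filter, funext_iff]
  rfl

theorem condProb_eq_pushforward_div (μ : (Fin L → Y) → ℝ) (l : Fin L) :
    condProb μ l = fun w a =>
      pushforward (fun y => (Fin.take l l.2.le y, y l)) μ (w, a) /
        pushforward (Fin.take l l.2.le) μ w := by
  ext w a
  rw [condProb, prefixMarginal_eq_pushforward]
  simp only [pushforward, Finset.sum_filter, Prod.mk.injEq, funext_iff]
  rfl

theorem isCondDistrib_condProb [Nonempty Y] {μ : (Fin L → Y) → ℝ} (hμ : ∀ y, 0 < μ y)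
    (l : Fin L) : IsCondDistrib (Fin.take l l.2.le) (fun y => y l) μ (condProb μ l) := by
  rw [condProb_eq_pushforward_div]
  exact isCondDistrib_div _ _ (fun y => (hμ y).le) fun w =>
    (pushforward_pos (take_surjective l.2.le) hμ w).ne'

end Prefix

/-- the expected (under `q`-prefixes) total variation between the conditional
next-coordinate distributions of `q` and `p` is at most `4 TV(p, q)`. -/
theorem conditional_tv_le_four_tv
    {Y : Type*} [Fintype Y] [Nonempty Y] [DecidableEq Y] {L : ℕ} (hL : 0 < L)
    (p q : (Fin L → Y) → ℝ)
    (hp : ∀ y, 0 < p y) (hq : ∀ y, 0 < q y)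
    (hpsum : ∑ y : Fin L → Y, p y = 1) (hqsum : ∑ y : Fin L → Y, q y = 1)
    (l : Fin L) :
    ∑ w : Fin l.1 → Y, prefixMarginal q l w *
        ∑ a : Y, |condProb q l w a - condProb p l w a| ≤
      4 * tv p q := by
  rw [prefixMarginal_eq_pushforward]
  exact conditional_tv_le_four_tv_general (fun y => (hq y).le) (isCondDistrib_condProb hq l)
    (isCondDistrib_condProb hp l)
end
end

section
/- Let K ≥ 2 be an integer, N > 0 a real number, and let μ : [0,∞) → ℝ be differentiable and satisfy the differential equation μ'(t) = 2K / ( N·( exp(μ(t)) + 2(K−1) + (K−1)²·exp(−μ(t)) ) ) for all t ≥ 0. Then for all t ≥ 0: (2K/N)·t + exp(μ(0)) + 2(K−1)·μ(0) − (K−1)²·exp(−μ(0)) = exp(μ(t)) + 2(K−1)·μ(t) − (K−1)²·exp(−μ(t)). -/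
/-!
Since `exp x + 2 * c + c ^ 2 * exp (-x) = exp (-x) * (exp x + c) ^ 2`, the gap equation is separable
with a right-hand side that is regular wherever `exp x + c ≠ 0`. Along a solution, the
antiderivative `exp x + 2 * c * x - c ^ 2 * exp (-x)` of the denominator therefore grows at constant
speed.
-/

theorem sub_eq_sub_of_hasDerivWithinAt {𝕜 E : Type*} [RCLike 𝕜] [NormedAddCommGroup E]
    [NormedSpace 𝕜 E] {f g f' : 𝕜 → E} {s : Set 𝕜} (hs : Convex ℝ s)
    (hf : ∀ x ∈ s, HasDerivWithinAt f (f' x) s x) (hg : ∀ x ∈ s, HasDerivWithinAt g (f' x) s x)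
    {x y : 𝕜} (hx : x ∈ s) (hy : y ∈ s) : f y - f x = g y - g x := by
  have hfg : ∀ z ∈ s, HasDerivWithinAt (f - g) 0 s z := fun z hz ↦ by
    simpa only [sub_self] using (hf z hz).sub (hg z hz)
  have hle : ‖(f - g) y - (f - g) x‖ ≤ 0 * ‖y - x‖ :=
    hs.norm_image_sub_le_of_norm_hasDerivWithin_le hfg (fun _ _ ↦ norm_zero.le) hx hy
  rw [zero_mul, norm_le_zero_iff, Pi.sub_apply, Pi.sub_apply, sub_sub_sub_comm] at hle
  exact sub_eq_zero.mp hle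

theorem sub_eq_sub_of_separable_ode {𝕜 : Type*} [RCLike 𝕜] {G g H h y : 𝕜 → 𝕜} {s : Set 𝕜}
    (hs : Convex ℝ s) (hG : ∀ τ ∈ s, HasDerivAt G (g (y τ)) (y τ)) (hg : ∀ τ ∈ s, g (y τ) ≠ 0)
    (hH : ∀ τ ∈ s, HasDerivWithinAt H (h τ) s τ)
    (hy : ∀ τ ∈ s, HasDerivWithinAt y (h τ / g (y τ)) s τ)
    {t₀ t : 𝕜} (ht₀ : t₀ ∈ s) (ht : t ∈ s) : G (y t) - G (y t₀) = H t - H t₀ := by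
  have hGy : ∀ τ ∈ s, HasDerivWithinAt (G ∘ y) (h τ) s τ := fun τ hτ ↦ by
    simpa only [mul_div_cancel₀ _ (hg τ hτ)] using (hG τ hτ).comp_hasDerivWithinAt τ (hy τ hτ)
  exact sub_eq_sub_of_hasDerivWithinAt hs hGy hH ht₀ ht

/-- The function of the logit gap that grows at constant speed along the gradient flow, where `c` is
the number `K - 1` of incorrect labels, allowed to be any real number. -/
noncomputable def gapPotential (c x : ℝ) : ℝ :=
  Real.exp x + 2 * c * x - c ^ 2 * Real.exp (-x)

theorem hasDerivAt_gapPotential (c x : ℝ) :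
    HasDerivAt (gapPotential c) (Real.exp x + 2 * c + c ^ 2 * Real.exp (-x)) x := by
  have hneg : HasDerivAt (fun x ↦ Real.exp (-x)) (Real.exp (-x) * -1) x := (hasDerivAt_neg x).exp
  refine (((Real.hasDerivAt_exp x).add ((hasDerivAt_id x).const_mul (2 * c))).sub
    (hneg.const_mul (c ^ 2))).congr_deriv ?_
  ring

theorem exp_add_two_mul_add_sq_mul_exp_neg (c x : ℝ) :
    Real.exp x + 2 * c + c ^ 2 * Real.exp (-x) = Real.exp (-x) * (Real.exp x + c) ^ 2 := by
  have hexp : Real.exp (-x) * Real.exp x = 1 := by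
    rw [← Real.exp_add, neg_add_cancel, Real.exp_zero]
  linear_combination (-Real.exp x - 2 * c) * hexp

theorem rft_gap_dynamics_implicit_solution_general {c r : ℝ} {μ : ℝ → ℝ} {s : Set ℝ}
    (hs : Convex ℝ s) (hne : ∀ τ ∈ s, Real.exp (μ τ) + c ≠ 0)
    (hode : ∀ τ ∈ s, HasDerivWithinAt μ
      (r / (Real.exp (μ τ) + 2 * c + c ^ 2 * Real.exp (-μ τ))) s τ)
    {t₀ t : ℝ} (ht₀ : t₀ ∈ s) (ht : t ∈ s) :
    r * (t - t₀) + Real.exp (μ t₀) + 2 * c * μ t₀ - c ^ 2 * Real.exp (-μ t₀) =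
      Real.exp (μ t) + 2 * c * μ t - c ^ 2 * Real.exp (-μ t) := by
  have hdenom : ∀ τ ∈ s, Real.exp (μ τ) + 2 * c + c ^ 2 * Real.exp (-μ τ) ≠ 0 := fun τ hτ ↦ by
    rw [exp_add_two_mul_add_sq_mul_exp_neg]
    exact mul_ne_zero (Real.exp_ne_zero _) (pow_ne_zero 2 (hne τ hτ))
  have hlin : ∀ τ ∈ s, HasDerivWithinAt (fun τ ↦ r * τ) r s τ := fun τ _ ↦
    (hasDerivAt_const_mul r).hasDerivWithinAt
  have hsep : gapPotential c (μ t) - gapPotential c (μ t₀) = r * t - r * t₀ :=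
    sub_eq_sub_of_separable_ode (g := fun x ↦ Real.exp x + 2 * c + c ^ 2 * Real.exp (-x)) hs
      (fun τ _ ↦ hasDerivAt_gapPotential c (μ τ)) hdenom hlin hode ht₀ ht
  simp only [gapPotential] at hsep
  linear_combination -hsep

/-- implicit solution of the reduced gradient-flow dynamics of the logit gap
under reinforcement finetuning of a linear softmax model. -/
theorem rft_gap_dynamics_implicit_solution
    (K : ℕ) (hK : 2 ≤ K) (N : ℝ) (hN : 0 < N) (μ : ℝ → ℝ)
    (hode : ∀ t : ℝ, 0 ≤ t →
      HasDerivAt μ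
        (2 * (K : ℝ) / (N * (Real.exp (μ t) + 2 * ((K : ℝ) - 1) +
          ((K : ℝ) - 1) ^ 2 * Real.exp (-μ t)))) t)
    (t : ℝ) (ht : 0 ≤ t) :
    (2 * (K : ℝ) / N) * t + Real.exp (μ 0) + 2 * ((K : ℝ) - 1) * μ 0 -
        ((K : ℝ) - 1) ^ 2 * Real.exp (-μ 0) =
      Real.exp (μ t) + 2 * ((K : ℝ) - 1) * μ t -
        ((K : ℝ) - 1) ^ 2 * Real.exp (-μ t) := by
  have hK₁ : 0 < (K : ℝ) - 1 := sub_pos.mpr (by exact_mod_cast hK)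
  simpa only [sub_zero] using rft_gap_dynamics_implicit_solution_general (convex_Ici 0)
    (fun τ _ ↦ (add_pos (Real.exp_pos (μ τ)) hK₁).ne')
    (fun τ hτ ↦ by simpa only [div_div] using (hode τ hτ).hasDerivWithinAt) Set.self_mem_Ici ht
end

section
/- Let K ≥ 2 be an integer, N > 0 a real number, and let μ : [0,∞) → ℝ be differentiable and satisfy μ'(t) = 2K / ( N·( exp(μ(t)) + 2(K−1) + (K−1)²·exp(−μ(t)) ) ) for all t ≥ 0, with μ(0) < 0. If t* ≥ 0 satisfies μ(t*) = 0, then t* = (N(K−1)²/(2K))·exp(−μ(0)) − N(K−1)²/(2K) + (N/(2K))·(1 − exp(μ(0))) − (N(K−1)/K)·μ(0), and in particular t* ≥ (N(K−1)²/(2K))·( exp(−μ(0)) − 1 ). -/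
/-!
The equation is separable: with `F x = exp x + 2 (K - 1) x - (K - 1)² exp (-x)` it says that
`F ∘ μ` has constant speed `2 K / N`, so the time spent between two levels of `μ` is
`N / (2 K)` times the increment of `F`. The summands `exp x + 2 (K - 1) x` and
`-(K - 1)² exp (-x)` of `F` are both monotone, so their increments have the same sign and each of
them contributes a nonnegative amount to that time; the lower bound keeps the contribution of the
second one only.
-/

open Set

theorem mul_sub_nonneg_of_strictMono {α R : Type*} [LinearOrder α]
    [Ring R] [LinearOrder R] [IsStrictOrderedRing R] {f g : α → R}
    (hf : StrictMono f) (hg : Monotone g) {c : R} {x y : α} (h : 0 ≤ c * (f y - f x)) :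
    0 ≤ c * (g y - g x) := by
  rcases lt_trichotomy c 0 with hc | rfl | hc
  · have hyx : y ≤ x := hf.le_iff_le.mp (sub_nonpos.mp (nonpos_of_mul_nonneg_right h hc))
    exact mul_nonneg_of_nonpos_of_nonpos hc.le (sub_nonpos.mpr (hg hyx))
  · rw [zero_mul]
  · have hxy : x ≤ y := hf.le_iff_le.mp (sub_nonneg.mp (nonneg_of_mul_nonneg_right h hc))
    exact mul_nonneg hc.le (sub_nonneg.mpr (hg hxy))

theorem sub_eq_mul_sub_of_deriv_right_eq_div {F g μ : ℝ → ℝ} {a b c : ℝ} (hab : a ≤ b)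
    (hF : ∀ t ∈ Icc a b, HasDerivAt F (g (μ t)) (μ t)) (hg : ∀ t ∈ Ico a b, g (μ t) ≠ 0)
    (hcont : ContinuousOn μ (Icc a b))
    (hode : ∀ t ∈ Ico a b, HasDerivWithinAt μ (c / g (μ t)) (Ici t) t) :
    F (μ b) - F (μ a) = c * (b - a) := by
  have hcomp : ∀ t ∈ Ico a b, HasDerivWithinAt (F ∘ μ) c (Ici t) t := fun t ht =>
    ((hF t (Ico_subset_Icc_self ht)).comp_hasDerivWithinAt t (hode t ht)).congr_deriv
      (mul_div_cancel₀ c (hg t ht))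
  have hline (t : ℝ) : HasDerivAt (fun s => F (μ a) + c * (s - a)) c t := by
    simpa only [mul_one] using (((hasDerivAt_id' t).sub_const a).const_mul c).const_add (F (μ a))
  have heq : F (μ b) = F (μ a) + c * (b - a) :=
    eq_of_has_deriv_right_eq hcomp (fun t _ => (hline t).hasDerivWithinAt)
      (fun t ht => (hF t ht).continuousAt.comp_continuousWithinAt (hcont t ht))
      (fun t _ => (hline t).continuousAt.continuousWithinAt)
      (by simp only [Function.comp_apply, sub_self, mul_zero, add_zero]) b ⟨hab, le_rfl⟩
  rw [heq, add_sub_cancel_left]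

/-- The function of the logit gap that grows at the constant speed `2 K / N` along the reduced
reinforcement finetuning flow. The number `K` of labels is a real parameter. -/
noncomputable def rftPotential (K x : ℝ) : ℝ :=
  Real.exp x + 2 * (K - 1) * x - (K - 1) ^ 2 * Real.exp (-x)

theorem hasDerivAt_rftPotential (K x : ℝ) :
    HasDerivAt (rftPotential K)
      (Real.exp x + 2 * (K - 1) + (K - 1) ^ 2 * Real.exp (-x)) x := by
  have hexp_neg : HasDerivAt (fun y => Real.exp (-y)) (-Real.exp (-x)) x := by
    simpa only [mul_neg_one] using (hasDerivAt_neg' x).exp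
  refine (((Real.hasDerivAt_exp x).add ((hasDerivAt_id' x).const_mul (2 * (K - 1)))).sub
    (hexp_neg.const_mul ((K - 1) ^ 2))).congr_deriv ?_
  ring

theorem exp_add_two_mul_sub_one_add_sq_mul_exp_neg_pos {K : ℝ} (hK : 1 ≤ K) (x : ℝ) :
    0 < Real.exp x + 2 * (K - 1) + (K - 1) ^ 2 * Real.exp (-x) :=
  add_pos_of_pos_of_nonneg
    (add_pos_of_pos_of_nonneg (Real.exp_pos x) (mul_nonneg zero_le_two (sub_nonneg.mpr hK)))
    (mul_nonneg (sq_nonneg _) (Real.exp_pos _).le)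

theorem strictMono_rftPotential {K : ℝ} (hK : 1 ≤ K) : StrictMono (rftPotential K) :=
  strictMono_of_hasDerivAt_pos (hasDerivAt_rftPotential K)
    (exp_add_two_mul_sub_one_add_sq_mul_exp_neg_pos hK)

theorem monotone_exp_add_two_mul_sub_one_mul {K : ℝ} (hK : 1 ≤ K) :
    Monotone fun x => Real.exp x + 2 * (K - 1) * x :=
  Real.exp_monotone.add
    (monotone_id.const_mul (mul_nonneg zero_le_two (sub_nonneg.mpr hK)))

theorem sub_eq_mul_rftPotential_sub {K : ℝ} (hK : 1 ≤ K) {N : ℝ} (hN : N ≠ 0)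
    {μ : ℝ → ℝ} {a b : ℝ} (hab : a ≤ b) (hcont : ContinuousOn μ (Icc a b))
    (hode : ∀ t ∈ Ico a b, HasDerivWithinAt μ
      (2 * K / (N * (Real.exp (μ t) + 2 * (K - 1) + (K - 1) ^ 2 * Real.exp (-μ t)))) (Ici t) t) :
    b - a = N / (2 * K) * (rftPotential K (μ b) - rftPotential K (μ a)) := by
  have hspeed : rftPotential K (μ b) - rftPotential K (μ a) = 2 * K / N * (b - a) :=
    sub_eq_mul_sub_of_deriv_right_eq_div
      (g := fun x => Real.exp x + 2 * (K - 1) + (K - 1) ^ 2 * Real.exp (-x)) hab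
      (fun t _ => hasDerivAt_rftPotential K (μ t))
      (fun t _ => (exp_add_two_mul_sub_one_add_sq_mul_exp_neg_pos hK (μ t)).ne') hcont
      (fun t ht => (hode t ht).congr_deriv (div_mul_eq_div_div _ _ _))
  have hK₀ : K ≠ 0 := (zero_lt_one.trans_le hK).ne'
  rw [hspeed]
  field_simp

theorem rft_time_to_correct_classification_general {K : ℝ} (hK : 1 ≤ K) {N : ℝ} (hN : N ≠ 0)
    {μ : ℝ → ℝ} {a b : ℝ} (hab : a ≤ b) (hcont : ContinuousOn μ (Icc a b))
    (hode : ∀ t ∈ Ico a b, HasDerivWithinAt μ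
      (2 * K / (N * (Real.exp (μ t) + 2 * (K - 1) + (K - 1) ^ 2 * Real.exp (-μ t)))) (Ici t) t) :
    b - a =
        N * (K - 1) ^ 2 / (2 * K) * (Real.exp (-μ a) - Real.exp (-μ b)) +
          N / (2 * K) * (Real.exp (μ b) - Real.exp (μ a)) +
          N * (K - 1) / K * (μ b - μ a) ∧
      N * (K - 1) ^ 2 / (2 * K) * (Real.exp (-μ a) - Real.exp (-μ b)) ≤ b - a := by
  have htime := sub_eq_mul_rftPotential_sub hK hN hab hcont hode
  have hrest := mul_sub_nonneg_of_strictMono (strictMono_rftPotential hK)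
    (monotone_exp_add_two_mul_sub_one_mul hK) (htime ▸ sub_nonneg.mpr hab)
  have hsplit : N / (2 * K) * (rftPotential K (μ b) - rftPotential K (μ a)) =
      N * (K - 1) ^ 2 / (2 * K) * (Real.exp (-μ a) - Real.exp (-μ b)) +
        N / (2 * K) * ((Real.exp (μ b) + 2 * (K - 1) * μ b) -
          (Real.exp (μ a) + 2 * (K - 1) * μ a)) := by
    unfold rftPotential
    ring
  rw [htime, hsplit]
  exact ⟨by ring, le_add_of_nonneg_right hrest⟩

/-- exact formula and exponential lower bound for the first time at which
the logit gap crosses zero under the reduced reinforcement finetuning gradient-flow dynamics. -/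
theorem rft_time_to_correct_classification
    (K : ℕ) (hK : 2 ≤ K) (N : ℝ) (hN : 0 < N) (μ : ℝ → ℝ)
    (hode : ∀ t : ℝ, 0 ≤ t →
      HasDerivAt μ
        (2 * (K : ℝ) / (N * (Real.exp (μ t) + 2 * ((K : ℝ) - 1) +
          ((K : ℝ) - 1) ^ 2 * Real.exp (-μ t)))) t)
    (hμ0 : μ 0 < 0)
    (tstar : ℝ) (htstar : 0 ≤ tstar) (hzero : μ tstar = 0) :
    tstar =
        (N * ((K : ℝ) - 1) ^ 2 / (2 * K)) * Real.exp (-μ 0) -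
          N * ((K : ℝ) - 1) ^ 2 / (2 * K) +
          (N / (2 * K)) * (1 - Real.exp (μ 0)) -
          (N * ((K : ℝ) - 1) / K) * μ 0 ∧
      tstar ≥ (N * ((K : ℝ) - 1) ^ 2 / (2 * K)) * (Real.exp (-μ 0) - 1) := by
  have hK₁ : (1 : ℝ) ≤ K := by exact_mod_cast one_le_two.trans hK
  have h := rft_time_to_correct_classification_general hK₁ hN.ne' htstar
    (fun t ht => (hode t ht.1).continuousAt.continuousWithinAt)
    (fun t ht => (hode t ht.1).hasDerivWithinAt)
  simp only [hzero, neg_zero, Real.exp_zero, sub_zero] at h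
  exact ⟨by linarith [h.1], h.2⟩
end

section
/- Let K ≥ 2 be an integer, N > 0 a real number, and let μ : [0,∞) → ℝ be differentiable and satisfy the differential equation μ'(t) = K / ( N·( exp(μ(t)) + (K−1) ) ) for all t ≥ 0. Then for all t ≥ 0: (K/N)·t + (K−1)·μ(0) + exp(μ(0)) = (K−1)·μ(t) + exp(μ(t)). -/
/-!
Separation of variables: the equation reads `(exp μ + (K - 1)) * μ' = K / N`, and the factor of `μ'`
has the primitive `m ↦ exp m + (K - 1) * m`. Hence `exp (μ t) + (K - 1) * μ t - (K / N) * t` is a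
first integral.
-/

section SeparableODE

variable {𝕜 : Type*} [RCLike 𝕜] {s : Set 𝕜} {x y : 𝕜}

theorem eq_of_convex_of_hasDerivWithinAt_zero {E : Type*} [NormedAddCommGroup E]
    [NormedSpace 𝕜 E] {f : 𝕜 → E} (hs : Convex ℝ s)
    (hf : ∀ z ∈ s, HasDerivWithinAt f 0 s z) (hx : x ∈ s) (hy : y ∈ s) : f x = f y := by
  have hle : ‖f x - f y‖ ≤ 0 * ‖x - y‖ :=
    hs.norm_image_sub_le_of_norm_hasDerivWithin_le hf (fun _ _ ↦ norm_zero.le) hy hx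
  rwa [zero_mul, norm_le_zero_iff, sub_eq_zero] at hle

theorem separable_ode_implicit_solution {𝕜' : Type*} [NontriviallyNormedField 𝕜']
    [NormedAlgebra 𝕜 𝕜'] {f g G : 𝕜 → 𝕜'} {h H : 𝕜' → 𝕜'} (hs : Convex ℝ s)
    (hH : ∀ z ∈ s, HasDerivAt H (h (f z)) (f z)) (hG : ∀ z ∈ s, HasDerivWithinAt G (g z) s z)
    (hne : ∀ z ∈ s, h (f z) ≠ 0) (hode : ∀ z ∈ s, HasDerivWithinAt f (g z / h (f z)) s z)
    (hx : x ∈ s) (hy : y ∈ s) : H (f y) - H (f x) = G y - G x := by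
  have hderiv : ∀ z ∈ s, HasDerivWithinAt (H ∘ f - G) 0 s z := fun z hz ↦ by
    simpa only [mul_div_cancel₀ _ (hne z hz), sub_self] using
      ((hH z hz).comp_hasDerivWithinAt z (hode z hz)).sub (hG z hz)
  have hconst : H (f y) - G y = H (f x) - G x :=
    eq_of_convex_of_hasDerivWithinAt_zero hs hderiv hy hx
  rwa [sub_eq_sub_iff_sub_eq_sub] at hconst

end SeparableODE

theorem sft_gap_dynamics_implicit_solution_general {b c : ℝ} {μ : ℝ → ℝ} {I : Set ℝ}
    (hI : Convex ℝ I) (hne : ∀ t ∈ I, Real.exp (μ t) + b ≠ 0)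
    (hode : ∀ t ∈ I, HasDerivWithinAt μ (c / (Real.exp (μ t) + b)) I t)
    {t₀ t : ℝ} (ht₀ : t₀ ∈ I) (ht : t ∈ I) :
    c * (t - t₀) + b * μ t₀ + Real.exp (μ t₀) = b * μ t + Real.exp (μ t) := by
  have hprimitive (m : ℝ) : HasDerivAt (fun m ↦ Real.exp m + b * m) (Real.exp m + b) m :=
    (Real.hasDerivAt_exp m).add (hasDerivAt_const_mul b)
  have hseparated : (Real.exp (μ t) + b * μ t) - (Real.exp (μ t₀) + b * μ t₀) = c * t - c * t₀ :=
    separable_ode_implicit_solution (h := fun m ↦ Real.exp m + b)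
      (H := fun m ↦ Real.exp m + b * m) hI (fun s _ ↦ hprimitive (μ s))
      (fun _ _ ↦ (hasDerivAt_const_mul c).hasDerivWithinAt) hne hode ht₀ ht
  linarith

/-- implicit solution of the reduced gradient-flow dynamics of the logit gap
under supervised finetuning (cross-entropy) of a linear softmax model. -/
theorem sft_gap_dynamics_implicit_solution
    (K : ℕ) (hK : 2 ≤ K) (N : ℝ) (hN : 0 < N) (μ : ℝ → ℝ)
    (hode : ∀ t : ℝ, 0 ≤ t →
      HasDerivAt μ ((K : ℝ) / (N * (Real.exp (μ t) + ((K : ℝ) - 1)))) t)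
    (t : ℝ) (ht : 0 ≤ t) :
    ((K : ℝ) / N) * t + ((K : ℝ) - 1) * μ 0 + Real.exp (μ 0) =
      ((K : ℝ) - 1) * μ t + Real.exp (μ t) := by
  have hK₁ : (0 : ℝ) ≤ K - 1 := sub_nonneg.2 (Nat.one_le_cast.2 (one_le_two.trans hK))
  simp only [← div_div] at hode
  simpa only [sub_zero] using sft_gap_dynamics_implicit_solution_general (convex_Ici 0)
    (fun s _ ↦ (add_pos_of_pos_of_nonneg (Real.exp_pos (μ s)) hK₁).ne')
    (fun s hs ↦ (hode s hs).hasDerivWithinAt) Set.self_mem_Ici ht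
end

section
/- Let K ≥ 2 be an integer, N > 0 a real number, and let μ : [0,∞) → ℝ be differentiable and satisfy μ'(t) = K / ( N·( exp(μ(t)) + (K−1) ) ) for all t ≥ 0, with μ(0) < 0. If t* ≥ 0 satisfies μ(t*) = 0, then t* = (N/K)·( 1 − (K−1)·μ(0) − exp(μ(0)) ), and in particular t* < N/K − (N(K−1)/K)·μ(0). -/
/-!
Separation of variables: multiplying the equation by `exp μ + (K - 1)` turns its left-hand side into
the time derivative of `exp μ + (K - 1) μ`, which therefore grows at the constant rate `K / N`.
Comparing its values at times `0` and `t*` gives the exact formula, and the upper bound drops the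
negative term `-(N / K) exp (μ 0)`.
-/

section SeparationOfVariables

theorem sub_eq_smul_of_hasDerivWithinAt_const {𝕜 E : Type*} [RCLike 𝕜] [NormedAddCommGroup E]
    [NormedSpace 𝕜 E] {f : 𝕜 → E} {c : E} {s : Set 𝕜} (hs : Convex ℝ s)
    (hf : ∀ t ∈ s, HasDerivWithinAt f c s t) {a b : 𝕜} (ha : a ∈ s) (hb : b ∈ s) :
    f b - f a = (b - a) • c := by
  have hderiv : ∀ t ∈ s, HasDerivWithinAt (fun t ↦ f t - t • c) 0 s t := fun t ht ↦ by
    simpa only [id_eq, one_smul, sub_self] using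
      (hf t ht).fun_sub ((hasDerivWithinAt_id t s).smul_const c)
  have hconst : ‖(f b - b • c) - (f a - a • c)‖ ≤ 0 * ‖b - a‖ :=
    hs.norm_image_sub_le_of_norm_hasDerivWithin_le hderiv (fun _ _ ↦ norm_zero.le) ha hb
  rw [zero_mul, norm_le_zero_iff, sub_sub_sub_comm, sub_eq_zero] at hconst
  rw [hconst, sub_smul]

theorem sub_eq_mul_of_hasDerivWithinAt_div {𝕜 : Type*} [RCLike 𝕜] {F f u : 𝕜 → 𝕜} {c : 𝕜}
    {s : Set 𝕜} (hs : Convex ℝ s) (hF : ∀ t ∈ s, HasDerivAt F (f (u t)) (u t))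
    (hf : ∀ t ∈ s, f (u t) ≠ 0) (hu : ∀ t ∈ s, HasDerivWithinAt u (c / f (u t)) s t)
    {a b : 𝕜} (ha : a ∈ s) (hb : b ∈ s) :
    F (u b) - F (u a) = (b - a) * c := by
  refine sub_eq_smul_of_hasDerivWithinAt_const (f := F ∘ u) hs (fun t ht ↦ ?_) ha hb
  simpa only [mul_div_cancel₀ c (hf t ht)] using (hF t ht).comp_hasDerivWithinAt t (hu t ht)

end SeparationOfVariables

section LogitGap

/-- The potential `exp x + (K - 1) x` of a logit gap `x` among `K` labels: the antiderivative of the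
softmax denominator `exp x + (K - 1)`, along which the finetuning dynamics is linear in time. The
number of labels is allowed to be any real number. -/
noncomputable def logitGapPotential (K x : ℝ) : ℝ :=
  Real.exp x + (K - 1) * x

theorem hasDerivAt_logitGapPotential (K x : ℝ) :
    HasDerivAt (logitGapPotential K) (Real.exp x + (K - 1)) x :=
  (Real.hasDerivAt_exp x).fun_add (hasDerivAt_const_mul (K - 1))

theorem logitGapPotential_zero (K : ℝ) : logitGapPotential K 0 = 1 := by
  simp [logitGapPotential]

variable {K N : ℝ} {μ : ℝ → ℝ} {s : Set ℝ}

theorem logitGapPotential_sub_eq_mul (hs : Convex ℝ s)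
    (hden : ∀ t ∈ s, Real.exp (μ t) + (K - 1) ≠ 0)
    (hode : ∀ t ∈ s, HasDerivWithinAt μ (K / (N * (Real.exp (μ t) + (K - 1)))) s t)
    {a b : ℝ} (ha : a ∈ s) (hb : b ∈ s) :
    logitGapPotential K (μ b) - logitGapPotential K (μ a) = (b - a) * (K / N) := by
  refine sub_eq_mul_of_hasDerivWithinAt_div (f := fun x ↦ Real.exp x + (K - 1)) hs
    (fun t _ ↦ hasDerivAt_logitGapPotential K (μ t)) hden (fun t ht ↦ ?_) ha hb
  simpa only [div_div] using hode t ht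

theorem sft_time_to_correct_classification_general (hK : 0 < K) (hN : 0 < N) (hs : Convex ℝ s)
    (hden : ∀ t ∈ s, Real.exp (μ t) + (K - 1) ≠ 0)
    (hode : ∀ t ∈ s, HasDerivWithinAt μ (K / (N * (Real.exp (μ t) + (K - 1)))) s t)
    (h0 : 0 ∈ s) {tstar : ℝ} (htstar : tstar ∈ s) (hzero : μ tstar = 0) :
    tstar = (N / K) * (1 - (K - 1) * μ 0 - Real.exp (μ 0)) ∧
      tstar < N / K - (N * (K - 1) / K) * μ 0 := by
  have hpotential : 1 - logitGapPotential K (μ 0) = tstar * (K / N) := by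
    simpa only [hzero, logitGapPotential_zero, sub_zero] using
      logitGapPotential_sub_eq_mul hs hden hode h0 htstar
  have htime : tstar = (N / K) * (1 - (K - 1) * μ 0 - Real.exp (μ 0)) := calc
    tstar = (N / K) * (tstar * (K / N)) := by field_simp
    _ = (N / K) * (1 - (K - 1) * μ 0 - Real.exp (μ 0)) := by
      rw [← hpotential, logitGapPotential]; ring
  refine ⟨htime, ?_⟩
  calc
    tstar = N / K - (N * (K - 1) / K) * μ 0 - (N / K) * Real.exp (μ 0) := by rw [htime]; ring
    _ < N / K - (N * (K - 1) / K) * μ 0 := sub_lt_self _ (by positivity)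

end LogitGap

/-- exact formula and logarithmic upper bound for the first time at which
the logit gap crosses zero under the reduced supervised finetuning gradient-flow dynamics. -/
theorem sft_time_to_correct_classification
    (K : ℕ) (hK : 2 ≤ K) (N : ℝ) (hN : 0 < N) (μ : ℝ → ℝ)
    (hode : ∀ t : ℝ, 0 ≤ t →
      HasDerivAt μ ((K : ℝ) / (N * (Real.exp (μ t) + ((K : ℝ) - 1)))) t)
    (hμ0 : μ 0 < 0)
    (tstar : ℝ) (htstar : 0 ≤ tstar) (hzero : μ tstar = 0) :
    tstar = (N / K) * (1 - ((K : ℝ) - 1) * μ 0 - Real.exp (μ 0)) ∧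
      tstar < N / K - (N * ((K : ℝ) - 1) / K) * μ 0 := by
  have hK1 : (1 : ℝ) ≤ K := by exact_mod_cast one_le_two.trans hK
  exact sft_time_to_correct_classification_general (zero_lt_one.trans_le hK1) hN (convex_Ici 0)
    (fun t _ ↦ (add_pos_of_pos_of_nonneg (Real.exp_pos (μ t)) (sub_nonneg.mpr hK1)).ne')
    (fun t ht ↦ (hode t ht).hasDerivWithinAt) Set.self_mem_Ici htstar hzero
end

section
/- Let K ≥ 2 be an integer, N > 0 a real number, and let μ : [0,∞) → ℝ be differentiable and satisfy μ'(t) = 2K / ( N·( exp(μ(t)) + 2(K−1) + (K−1)²·exp(−μ(t)) ) ) for all t ≥ 0, with μ(0) < 0. Define the initial reward standard deviation σ := sqrt( 4(K−1) / ( exp(μ(0)) + 2(K−1) + (K−1)²·exp(−μ(0)) ) ). If t* ≥ 0 satisfies μ(t*) = 0, then t* ≥ (2N(K−1)/K)·( 1/σ² − 1 − (K−1)/4 ); in particular, the time until correct classification under reinforcement finetuning grows at least inverse-quadratically in σ. -/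
/-!
The flow `μ' = a / w(μ)` separates: a primitive `Φ` of `w` grows along it at the constant rate `a`,
so the time needed to bring `μ` from `μ 0` up to `0` is exactly `(Φ 0 - Φ (μ 0)) / a`. Up to a
constant factor `w` is the reciprocal of the reward variance. Since `w` and `-Φ` share the term
`c² exp (-x)`, which dominates as `x → -∞`, this time is of order `1 / σ²`.
-/

section SeparableFlow

open Set

theorem sub_eq_mul_sub_of_hasDerivWithinAt_div {Φ w μ : ℝ → ℝ} {a t₀ t₁ : ℝ} (h01 : t₀ ≤ t₁)
    (hΦ : ∀ t ∈ Icc t₀ t₁, HasDerivAt Φ (w (μ t)) (μ t)) (hw : ∀ t ∈ Icc t₀ t₁, w (μ t) ≠ 0)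
    (hμ : ∀ t ∈ Icc t₀ t₁, HasDerivWithinAt μ (a / w (μ t)) (Icc t₀ t₁) t) :
    Φ (μ t₁) - Φ (μ t₀) = a * (t₁ - t₀) := by
  have hconserved : ∀ t ∈ Icc t₀ t₁,
      HasDerivWithinAt (fun s ↦ Φ (μ s) - a * s) 0 (Icc t₀ t₁) t := fun t ht ↦ by
    have hcomp := (hΦ t ht).comp_hasDerivWithinAt t (hμ t ht)
    rw [mul_div_cancel₀ _ (hw t ht)] at hcomp
    exact (hcomp.sub ((hasDerivWithinAt_id t _).const_mul a)).congr_deriv (by ring)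
  have hconst := constant_of_has_deriv_right_zero
    (fun t ht ↦ (hconserved t ht).continuousWithinAt)
    (fun t ht ↦ (hconserved t (Ico_subset_Icc_self ht)).mono_of_mem_nhdsWithin
      (Icc_mem_nhdsGE_of_mem ht))
    t₁ (right_mem_Icc.2 h01)
  linarith

end SeparableFlow

section LogitGap

open Real

/-- The denominator of the logit gap dynamics. If one label leads `c` others of equal logits by the
logit gap `x`, then its softmax probability `p = exp x / (exp x + c)` satisfies
`p * (1 - p) = c / gapDenom c x`. The number `c` of incorrect labels is allowed to be real. -/
noncomputable def gapDenom (c x : ℝ) : ℝ :=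
  exp x + 2 * c + c ^ 2 * exp (-x)

/-- A primitive of `gapDenom c`, which the logit gap dynamics increases at a constant rate. -/
noncomputable def gapPrimitive (c x : ℝ) : ℝ :=
  exp x + 2 * c * x - c ^ 2 * exp (-x)

/-- The standard deviation `√(4 * p * (1 - p))` of a reward that is `1` with probability
`p = exp x / (exp x + c)`, the softmax probability of the correct label, and `-1` otherwise. -/
noncomputable def rewardStd (c x : ℝ) : ℝ :=
  √(4 * c / gapDenom c x)

variable {c : ℝ}

theorem gapDenom_pos (hc : 0 ≤ c) (x : ℝ) : 0 < gapDenom c x := by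
  unfold gapDenom
  positivity

theorem hasDerivAt_gapPrimitive (c x : ℝ) : HasDerivAt (gapPrimitive c) (gapDenom c x) x := by
  have h := ((hasDerivAt_exp x).add ((hasDerivAt_id x).const_mul (2 * c))).sub
    ((hasDerivAt_neg x).exp.const_mul (c ^ 2))
  refine h.congr_deriv ?_
  unfold gapDenom
  ring

theorem strictMono_gapPrimitive (hc : 0 ≤ c) : StrictMono (gapPrimitive c) :=
  strictMono_of_hasDerivAt_pos (hasDerivAt_gapPrimitive c) (gapDenom_pos hc)

theorem one_div_rewardStd_sq (hc : 0 ≤ c) (x : ℝ) :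
    1 / rewardStd c x ^ 2 = gapDenom c x / (4 * c) := by
  have hvar : 0 ≤ 4 * c / gapDenom c x := div_nonneg (by positivity) (gapDenom_pos hc x).le
  rw [rewardStd, sq_sqrt hvar, one_div_div]

theorem gapDenom_sub_le_gapPrimitive_sub {x : ℝ} (hc : 1 / 2 ≤ c) (hx : x ≤ 0) :
    gapDenom c x - 4 * c - c ^ 2 ≤ gapPrimitive c 0 - gapPrimitive c x := by
  have hexp : exp x ≤ 1 := exp_le_one_iff.2 hx
  have hlin : c * x ≤ 0 := mul_nonpos_of_nonneg_of_nonpos (by linarith) hx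
  simp only [gapDenom, gapPrimitive, neg_zero, exp_zero]
  linarith

end LogitGap

theorem rft_time_lower_bound_in_reward_std_general {K N T : ℝ} {μ : ℝ → ℝ} (hK : 3 / 2 ≤ K)
    (hN : 0 < N) (hT : 0 ≤ T)
    (hode : ∀ t ∈ Set.Icc 0 T,
      HasDerivWithinAt μ (2 * K / (N * gapDenom (K - 1) (μ t))) (Set.Icc 0 T) t)
    (hzero : μ T = 0) :
    2 * N * (K - 1) / K * (1 / rewardStd (K - 1) (μ 0) ^ 2 - 1 - (K - 1) / 4) ≤ T := by
  have hhalf : 1 / 2 ≤ K - 1 := by linarith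
  have hc : 0 < K - 1 := by linarith
  have hK0 : 0 < K := by linarith
  have hgrowth : gapPrimitive (K - 1) 0 - gapPrimitive (K - 1) (μ 0) = 2 * K / N * T := by
    simp only [← div_div] at hode
    simpa [hzero] using sub_eq_mul_sub_of_hasDerivWithinAt_div hT
      (fun t _ ↦ hasDerivAt_gapPrimitive (K - 1) (μ t))
      (fun t _ ↦ (gapDenom_pos hc.le (μ t)).ne') hode
  have hμ0 : μ 0 ≤ 0 := by
    have hrise : 0 ≤ 2 * K / N * T := by positivity
    exact (strictMono_gapPrimitive hc.le).le_iff_le.1 (by linarith)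
  calc 2 * N * (K - 1) / K * (1 / rewardStd (K - 1) (μ 0) ^ 2 - 1 - (K - 1) / 4)
    _ = N / (2 * K) * (gapDenom (K - 1) (μ 0) - 4 * (K - 1) - (K - 1) ^ 2) := by
      rw [one_div_rewardStd_sq hc.le]
      field_simp
      ring
    _ ≤ N / (2 * K) * (gapPrimitive (K - 1) 0 - gapPrimitive (K - 1) (μ 0)) :=
      mul_le_mul_of_nonneg_left (gapDenom_sub_le_gapPrimitive_sub hhalf hμ0) (by positivity)
    _ = T := by
      rw [hgrowth]
      field_simp

/-- under the reduced reinforcement finetuning gradient-flow dynamics, the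
time until correct classification is lower bounded inverse-quadratically in the initial reward
standard deviation `σ`. -/
theorem rft_time_lower_bound_in_reward_std
    (K : ℕ) (hK : 2 ≤ K) (N : ℝ) (hN : 0 < N) (μ : ℝ → ℝ)
    (hode : ∀ t : ℝ, 0 ≤ t →
      HasDerivAt μ
        (2 * (K : ℝ) / (N * (Real.exp (μ t) + 2 * ((K : ℝ) - 1) +
          ((K : ℝ) - 1) ^ 2 * Real.exp (-μ t)))) t)
    (hμ0 : μ 0 < 0)
    (σ : ℝ)
    (hσ : σ = Real.sqrt (4 * ((K : ℝ) - 1) /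
      (Real.exp (μ 0) + 2 * ((K : ℝ) - 1) + ((K : ℝ) - 1) ^ 2 * Real.exp (-μ 0))))
    (tstar : ℝ) (htstar : 0 ≤ tstar) (hzero : μ tstar = 0) :
    tstar ≥ (2 * N * ((K : ℝ) - 1) / K) * (1 / σ ^ 2 - 1 - ((K : ℝ) - 1) / 4) := by
  have hK2 : (2 : ℝ) ≤ K := by exact_mod_cast hK
  rw [hσ]
  exact rft_time_lower_bound_in_reward_std_general (by linarith) hN htstar
    (fun t ht ↦ (hode t ht.1).hasDerivWithinAt) hzero
end
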